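/- Let k ≥ 6 be an integer and let α, β ∈ {0,1,…,k}. There exists a k-L(2,1)-labelling L of the gadget G_k with L(u) = k, L(v) = 0, L(a_u) = α and L(a_v) = β if and only if (α,β) = (1, k−1). -/

import Mathlib

/-- For an integer `k`, a `k`-L(2,1)-labelling of a graph `G` is a map from the vertices
to `{0,1,…,k}` such that labels of adjacent vertices differ by at least `2` and vertices
at distance exactly `2` get distinct labels. -/
def IsL21Labelling {V : Type*} (G : SimpleGraph V) (k : ℕ) (L : V → ℕ) : Prop :=
  (∀ v, L v ≤ k) ∧
  (∀ x y, G.Adj x y → 2 ≤ |(L x : ℤ) - (L y : ℤ)|) ∧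
  (∀ x y, G.dist x y = 2 → L x ≠ L y)

/-- The vertices of the graph `H'` for a given `k`:
`c, d, e, f₁, …, f_{k-3}, g, h, i`. -/
inductive HpV (k : ℕ) | c | d | e | f (j : Fin (k - 3)) | g | h | i
deriving DecidableEq

/-- The adjacency generating relation of `H'`: edges `cd`, `de`, `gh`, `gi`,
and `d fⱼ`, `g fⱼ` for every `j`. -/
def HpAdj (k : ℕ) : HpV k → HpV k → Prop := fun x y =>
  (x = HpV.c ∧ y = HpV.d) ∨ (x = HpV.d ∧ y = HpV.e) ∨
  (x = HpV.g ∧ y = HpV.h) ∨ (x = HpV.g ∧ y = HpV.i) ∨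
  (∃ j, (x = HpV.d ∧ y = HpV.f j) ∨ (x = HpV.g ∧ y = HpV.f j))

/-- The vertices of the gadget `G_k` (for `k ≥ 6`): the path `u, a_u, a_v, v`,
the vertices `b₁, …, b_{k-5}`, and for each `i` two copies (indexed by `Bool`)
of the graph `H'`. -/
inductive GkV (k : ℕ)
| u | au | av | v
| b (i : Fin (k - 5))
| hp (i : Fin (k - 5)) (s : Bool) (x : HpV k)

/-- The adjacency generating relation of the gadget `G_k` (for `k ≥ 6`):
the path `u a_u`, `a_u a_v`, `a_v v`; each `bᵢ` joined to `a_u` and `a_v`;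
the vertex `c` of each of the two copies of `H'` at `bᵢ` joined to `bᵢ`;
and the edges of `H'` inside each copy. -/
def GkAdj (k : ℕ) : GkV k → GkV k → Prop := fun x y =>
  (x = GkV.u ∧ y = GkV.au) ∨ (x = GkV.au ∧ y = GkV.av) ∨ (x = GkV.av ∧ y = GkV.v) ∨
  (∃ i, (x = GkV.au ∧ y = GkV.b i) ∨ (x = GkV.av ∧ y = GkV.b i)) ∨
  (∃ i s, x = GkV.b i ∧ y = GkV.hp i s HpV.c) ∨
  (∃ i s x' y', x = GkV.hp i s x' ∧ y = GkV.hp i s y' ∧ HpAdj k x' y')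

/-- The gadget `G_k` (for `k ≥ 6`). -/
def Gk (k : ℕ) : SimpleGraph (GkV k) := SimpleGraph.fromRel (GkAdj k)


theorem l21_iff {V : Type*} (G : SimpleGraph V) (k : ℕ) (L : V → ℕ) :
    IsL21Labelling G k L ↔ (∀ v, L v ≤ k) ∧
      (∀ x y, G.Adj x y → L x + 2 ≤ L y ∨ L y + 2 ≤ L x) ∧
      (∀ z x y, G.Adj z x → G.Adj z y → x ≠ y → L x ≠ L y) := by
  have habs : ∀ a b : ℕ, (2 ≤ |(a : ℤ) - (b : ℤ)|) ↔ (a + 2 ≤ b ∨ b + 2 ≤ a) := by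
    intro a b
    rw [le_abs]
    omega
  unfold IsL21Labelling
  simp only [habs]
  constructor
  · rintro ⟨h1, h2, h3⟩
    refine ⟨h1, h2, ?_⟩
    intro z x y hx hy hne
    by_cases hadj : G.Adj x y
    · have := h2 x y hadj
      omega
    · apply h3
      have hle : G.dist x y ≤ 2 :=
        SimpleGraph.dist_le (SimpleGraph.Walk.cons hx.symm (SimpleGraph.Walk.cons hy SimpleGraph.Walk.nil))
      have hr : G.Reachable x y := hx.symm.reachable.trans hy.reachable
      have h0 : G.dist x y ≠ 0 := by
        intro h
        exact hne (hr.dist_eq_zero_iff.1 h)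
      have h1 : G.dist x y ≠ 1 := by
        intro h
        exact hadj (SimpleGraph.dist_eq_one_iff_adj.1 h)
      omega
  · rintro ⟨h1, h2, h3⟩
    refine ⟨h1, h2, ?_⟩
    intro x y hd
    have hr : G.Reachable x y := by
      by_contra hn
      rw [SimpleGraph.dist_eq_zero_of_not_reachable hn] at hd
      omega
    obtain ⟨p, hp⟩ := hr.exists_walk_length_eq_dist
    rw [hd] at hp
    have hne : x ≠ y := by
      rintro rfl
      simp at hd
    match p, hp with
    | .cons h (.cons h' .nil), _ => exact h3 _ x y h.symm h' hne

theorem deg_end (k : ℕ) (hk : 6 ≤ k) (f : Fin (k - 3) → ℕ) (hf : Function.Injective f)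
    (x p q : ℕ) (hx : x ≤ k) (hpq : p ≠ q) (hp : ∀ j, f j ≠ p) (hq : ∀ j, f j ≠ q)
    (hpk : p ≤ k) (hqk : q ≤ k) (hfk : ∀ j, f j ≤ k)
    (hxp : x + 2 ≤ p ∨ p + 2 ≤ x) (hxq : x + 2 ≤ q ∨ q + 2 ≤ x)
    (hxf : ∀ j, x + 2 ≤ f j ∨ f j + 2 ≤ x) : x = 0 ∨ x = k := by
  by_contra hcon
  have hc : (insert p (insert q (Finset.univ.image f)) ∪ {x - 1, x, x + 1}).card
      ≤ (Finset.range (k + 1)).card := by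
    apply Finset.card_le_card
    intro a ha
    simp only [Finset.mem_union, Finset.mem_insert, Finset.mem_image, Finset.mem_univ, true_and,
      Finset.mem_singleton] at ha
    rw [Finset.mem_range]
    rcases ha with (rfl | rfl | ⟨j, rfl⟩) | rfl | rfl | rfl
    · omega
    · omega
    · have := hfk j
      omega
    · omega
    · omega
    · omega
  rw [Finset.card_union_of_disjoint, Finset.card_insert_of_notMem, Finset.card_insert_of_notMem,
    Finset.card_image_of_injective _ hf, Finset.card_univ, Fintype.card_fin, Finset.card_range,
    Finset.card_insert_of_notMem, Finset.card_insert_of_notMem, Finset.card_singleton] at hc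
  · omega
  · simp
  · simp
    omega
  · simp [hq]
  · simp [hpq, hp]
  · rw [Finset.disjoint_left]
    intro a ha
    simp only [Finset.mem_insert, Finset.mem_image, Finset.mem_univ, true_and,
      Finset.mem_singleton] at ha ⊢
    rcases ha with rfl | rfl | ⟨j, rfl⟩
    · omega
    · omega
    · have := hxf j
      omega

theorem surj_mid (k : ℕ) (hk : 6 ≤ k) (f : Fin (k - 3) → ℕ) (hf : Function.Injective f)
    (h : ∀ j, 2 ≤ f j ∧ f j ≤ k - 2) (a : ℕ) (h2 : 2 ≤ a) (h3 : a ≤ k - 2) : ∃ j, f j = a := by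
  have : Finset.univ.image f = Finset.Icc 2 (k - 2) := by
    apply Finset.eq_of_subset_of_card_le
    · intro a ha
      simp only [Finset.mem_image, Finset.mem_univ, true_and] at ha
      obtain ⟨j, rfl⟩ := ha
      exact Finset.mem_Icc.2 (h j)
    · rw [Finset.card_image_of_injective _ hf]
      simp
      omega
  have ha : a ∈ Finset.univ.image f := by
    rw [this]
    exact Finset.mem_Icc.2 ⟨h2, h3⟩
  simpa using ha

theorem b_card (k : ℕ) (hk : 6 ≤ k) (f : Fin (k - 5) → ℕ) (hf : Function.Injective f)
    (h : ∀ j, 1 ≤ f j ∧ f j ≤ k - 1) (T : Finset ℕ) (hT : ∀ t ∈ T, 1 ≤ t ∧ t ≤ k - 1)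
    (hd : ∀ t ∈ T, ∀ j, f j ≠ t) : T.card ≤ 4 := by
  have hc : (Finset.univ.image f ∪ T).card ≤ (Finset.Icc 1 (k - 1)).card := by
    apply Finset.card_le_card
    intro a ha
    simp only [Finset.mem_union, Finset.mem_image, Finset.mem_univ, true_and] at ha
    rw [Finset.mem_Icc]
    rcases ha with ⟨j, rfl⟩ | ha
    · exact h j
    · exact hT a ha
  rw [Finset.card_union_of_disjoint, Finset.card_image_of_injective _ hf] at hc
  · simp at hc
    omega
  · rw [Finset.disjoint_right]
    intro a ha
    simpa using hd a ha

theorem b_five (k : ℕ) (hk : 6 ≤ k) (f : Fin (k - 5) → ℕ) (hf : Function.Injective f)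
    (h : ∀ j, 1 ≤ f j ∧ f j ≤ k - 1) (a b c d e : ℕ) (ha : 1 ≤ a) (hab : a < b) (hbc : b < c)
    (hcd : c < d) (hde : d < e) (he : e ≤ k - 1)
    (hd : ∀ j, f j ≠ a ∧ f j ≠ b ∧ f j ≠ c ∧ f j ≠ d ∧ f j ≠ e) : False := by
  have := b_card k hk f hf h {a, b, c, d, e} (by simp; omega) (by
    intro t ht j
    have := hd j
    simp at ht
    rcases ht with rfl | rfl | rfl | rfl | rfl <;> tauto)
  rw [Finset.card_insert_of_notMem (by simp; omega), Finset.card_insert_of_notMem (by simp; omega),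
    Finset.card_insert_of_notMem (by simp; omega), Finset.card_insert_of_notMem (by simp; omega),
    Finset.card_singleton] at this
  omega

def labH (k : ℕ) : Bool → HpV k → ℕ
  | false, .c => 0
  | false, .d => k
  | false, .e => 1
  | false, .f j => j + 2
  | false, .g => 0
  | false, .h => k
  | false, .i => k - 1
  | true, .c => k
  | true, .d => 0
  | true, .e => k - 1
  | true, .f j => j + 2
  | true, .g => k
  | true, .h => 0
  | true, .i => 1

def labG (k : ℕ) : GkV k → ℕ
  | .u => k
  | .au => 1
  | .av => k - 1
  | .v => 0
  | .b i => i + 3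
  | .hp _ s x => labH k s x

theorem gk_adj (k : ℕ) (x y : GkV k) : (Gk k).Adj x y ↔ (GkAdj k x y ∨ GkAdj k y x) := by
  unfold Gk
  rw [SimpleGraph.fromRel_adj]
  constructor
  · exact fun h => h.2
  · intro h
    refine ⟨?_, h⟩
    rintro rfl
    rw [or_self] at h
    cases x with
    | hp i s x => cases x <;> simp [GkAdj, HpAdj] at h
    | _ => simp [GkAdj] at h

theorem labG_ok (k : ℕ) (hk : 6 ≤ k) : IsL21Labelling (Gk k) k (labG k) := by
  rw [l21_iff]
  refine ⟨?_, ?_, ?_⟩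
  · intro x
    rcases x with _ | _ | _ | _ | i | ⟨i, s, x⟩
    case hp => rcases s <;> rcases x <;> simp [labG, labH] <;> omega
    all_goals simp [labG] <;> omega
  · have key : ∀ x y, GkAdj k x y → labG k x + 2 ≤ labG k y ∨ labG k y + 2 ≤ labG k x := by
      intro x y h
      rcases h with ⟨rfl, rfl⟩ | ⟨rfl, rfl⟩ | ⟨rfl, rfl⟩ | ⟨i, ⟨rfl, rfl⟩ | ⟨rfl, rfl⟩⟩ |
        ⟨i, s, rfl, rfl⟩ | ⟨i, s, x, y, rfl, rfl, h⟩
      · simp [labG]; omega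
      · simp [labG]; omega
      · simp [labG]; omega
      · simp [labG]
      · simp [labG]; omega
      · cases s <;> simp [labG, labH] <;> omega
      · rcases h with ⟨rfl, rfl⟩ | ⟨rfl, rfl⟩ | ⟨rfl, rfl⟩ | ⟨rfl, rfl⟩ |
          ⟨j, ⟨rfl, rfl⟩ | ⟨rfl, rfl⟩⟩ <;> cases s <;> simp [labG, labH] <;> omega
    intro x y h
    rw [gk_adj] at h
    rcases h with h | h
    · exact key x y h
    · exact (key y x h).symm
  · intro z x y hx hy hne
    rw [gk_adj] at hx hy
    rcases z with _ | _ | _ | _ | i | ⟨i, s, z⟩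
    case hp =>
      cases z <;> simp [GkAdj, HpAdj] at hx hy <;> cases s <;> grind [labG, labH]
    all_goals
      simp [GkAdj] at hx hy
      grind [labG, labH]

theorem stmt_12 (k : ℕ) (hk : 6 ≤ k) (α β : ℕ) (hα : α ≤ k) (hβ : β ≤ k) :
    (∃ L : GkV k → ℕ, IsL21Labelling (Gk k) k L ∧
      L GkV.u = k ∧ L GkV.v = 0 ∧ L GkV.au = α ∧ L GkV.av = β) ↔
    (α, β) = (1, k - 1) := by
  constructor
  · rintro ⟨L, hL, hu, hv, hau, hav⟩
    rw [l21_iff] at hL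
    obtain ⟨h1, h2, h3⟩ := hL
    -- adjacency facts
    have aU : (Gk k).Adj .au .u := by simp [gk_adj, GkAdj]
    have aA : (Gk k).Adj .au .av := by simp [gk_adj, GkAdj]
    have aV : (Gk k).Adj .av .v := by simp [gk_adj, GkAdj]
    have aB : ∀ i, (Gk k).Adj .au (.b i) := by simp [gk_adj, GkAdj]
    have vB : ∀ i, (Gk k).Adj .av (.b i) := by simp [gk_adj, GkAdj]
    have bC : ∀ i s, (Gk k).Adj (.b i) (.hp i s .c) := by simp [gk_adj, GkAdj]
    have dC : ∀ i s, (Gk k).Adj (.hp i s .d) (.hp i s .c) := by simp [gk_adj, GkAdj, HpAdj]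
    have dE : ∀ i s, (Gk k).Adj (.hp i s .d) (.hp i s .e) := by simp [gk_adj, GkAdj, HpAdj]
    have dF : ∀ i s j, (Gk k).Adj (.hp i s .d) (.hp i s (.f j)) := by simp [gk_adj, GkAdj, HpAdj]
    have gF : ∀ i s j, (Gk k).Adj (.hp i s .g) (.hp i s (.f j)) := by simp [gk_adj, GkAdj, HpAdj]
    have gH : ∀ i s, (Gk k).Adj (.hp i s .g) (.hp i s .h) := by simp [gk_adj, GkAdj, HpAdj]
    have gI : ∀ i s, (Gk k).Adj (.hp i s .g) (.hp i s .i) := by simp [gk_adj, GkAdj, HpAdj]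
    -- labels of c
    have hC : ∀ i s, L (.hp i s .c) ≤ 1 ∨ k - 1 ≤ L (.hp i s .c) := by
      intro i s
      have hinj : Function.Injective (fun j => L (.hp i s (.f j))) := by
        intro j j' h
        by_contra hne
        exact h3 _ _ _ (dF i s j) (dF i s j') (by simpa using hne) h
      have hd := deg_end k hk _ hinj (L (.hp i s .d)) (L (.hp i s .c)) (L (.hp i s .e)) (h1 _)
        (h3 _ _ _ (dC i s) (dE i s) (by simp))
        (fun j => h3 _ _ _ (dF i s j) (dC i s) (by simp))
        (fun j => h3 _ _ _ (dF i s j) (dE i s) (by simp))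
        (h1 _) (h1 _) (fun j => h1 _) (h2 _ _ (dC i s)) (h2 _ _ (dE i s))
        (fun j => h2 _ _ (dF i s j))
      have hg := deg_end k hk _ hinj (L (.hp i s .g)) (L (.hp i s .h)) (L (.hp i s .i)) (h1 _)
        (h3 _ _ _ (gH i s) (gI i s) (by simp))
        (fun j => h3 _ _ _ (gF i s j) (gH i s) (by simp))
        (fun j => h3 _ _ _ (gF i s j) (gI i s) (by simp))
        (h1 _) (h1 _) (fun j => h1 _) (h2 _ _ (gH i s)) (h2 _ _ (gI i s))
        (fun j => h2 _ _ (gF i s j))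
      have hdg : L (.hp i s .d) ≠ L (.hp i s .g) :=
        h3 _ _ _ (dF i s ⟨0, by omega⟩).symm (gF i s ⟨0, by omega⟩).symm (by simp)
      have hmid : ∀ j, 2 ≤ L (.hp i s (.f j)) ∧ L (.hp i s (.f j)) ≤ k - 2 := by
        intro j
        have e1 := h2 _ _ (dF i s j)
        have e2 := h2 _ _ (gF i s j)
        have e3 := h1 (.hp i s (.f j))
        omega
      by_contra hcon
      obtain ⟨j, hj⟩ := surj_mid k hk _ hinj hmid (L (.hp i s .c)) (by omega) (by omega)
      exact h3 _ _ _ (dF i s j) (dC i s) (by simp) hj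
    have hα0 : L .au ≠ L .v := h3 _ _ _ aA.symm aV (by simp)
    have hβk : L .av ≠ L .u := h3 _ _ _ aA aU (by simp)
    have e1 := h2 _ _ aU
    have e2 := h2 _ _ aA
    have e3 := h2 _ _ aV
    have hbinj : Function.Injective (fun i => L (.b i)) := by
      intro j j' h
      by_contra hne
      exact h3 _ _ _ (aB j) (aB j') (by simpa using hne) h
    have hbα := fun i => h2 _ _ (aB i)
    have hbβ := fun i => h2 _ _ (vB i)
    have hb : ∀ i, 1 ≤ L (.b i) ∧ L (.b i) ≤ k - 1 := by
      intro i
      have f1 := h3 _ _ _ (aB i) aU (by simp)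
      have f2 := h3 _ _ _ (vB i) aV (by simp)
      have f3 := h1 (.b i)
      omega
    have hcc : ∀ i, L (.hp i true .c) ≠ L (.hp i false .c) :=
      fun i => h3 _ _ _ (bC i _) (bC i _) (by simp)
    have hcα : ∀ i s, L (.hp i s .c) ≠ L .au :=
      fun i s => h3 _ _ _ (bC i s) (aB i).symm (by simp)
    have hcβ : ∀ i s, L (.hp i s .c) ≠ L .av :=
      fun i s => h3 _ _ _ (bC i s) (vB i).symm (by simp)
    have hbc := fun i s => h2 _ _ (bC i s)
    have five : ∀ a b c d e : ℕ, 1 ≤ a → a < b → b < c → c < d → d < e → e ≤ k - 1 →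
        (∀ j, L (.b j) ≠ a ∧ L (.b j) ≠ b ∧ L (.b j) ≠ c ∧ L (.b j) ≠ d ∧ L (.b j) ≠ e) → False :=
      b_five k hk _ hbinj hb
    rw [Prod.mk.injEq]
    by_contra hne
    by_cases hα1 : α = 1
    · by_cases hβ3 : β = 3
      · apply five 1 2 3 4 (k - 1) <;> try omega
        intro i
        have t1 := hbα i
        have t2 := hbβ i
        refine ⟨by omega, by omega, by omega, by omega, ?_⟩
        intro hi
        have := hC i true
        have := hC i false
        have := hbc i true
        have := hbc i false
        have := hcc i
        have := hcα i true
        have := hcα i false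
        have := h1 (.hp i true .c)
        have := h1 (.hp i false .c)
        omega
      · apply five 1 2 (β - 1) β (β + 1) <;> try omega
        intro i
        have t1 := hbα i
        have t2 := hbβ i
        omega
    · rcases Nat.lt_or_ge β α with hlt | hge
      · apply five (β - 1) β (α - 1) α (α + 1) <;> try omega
        intro i
        have t1 := hbα i
        have t2 := hbβ i
        omega
      · by_cases hβ2 : β = α + 2
        · by_cases hβ1 : β = k - 1
          · apply five 1 (α - 1) α (α + 1) β <;> try omega
            intro i
            have t1 := hbα i
            have t2 := hbβ i
            refine ⟨?_, by omega, by omega, by omega, by omega⟩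
            intro hi
            have := hC i true
            have := hC i false
            have := hbc i true
            have := hbc i false
            have := hcc i
            have := hcβ i true
            have := hcβ i false
            have := h1 (.hp i true .c)
            have := h1 (.hp i false .c)
            omega
          · apply five (α - 1) α (α + 1) β (β + 1) <;> try omega
            intro i
            have t1 := hbα i
            have t2 := hbβ i
            omega
        · apply five (α - 1) α (α + 1) (β - 1) β <;> try omega
          intro i
          have t1 := hbα i
          have t2 := hbβ i
          omega
  · intro h
    rw [Prod.mk.injEq] at h
    obtain ⟨rfl, rfl⟩ := h
    exact ⟨labG k, labG_ok k hk, rfl, rfl, rfl, rfl⟩
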